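/- Let d ≥ 1 and let F₁, F₂ be probability distributions on ℝ^d with finite first moments, i.e. E‖X‖ < ∞ for X ∼ F₁ and E‖Y‖ < ∞ for Y ∼ F₂. Let X₁, X₂ be i.i.d. F₁ and Y₁, Y₂ be i.i.d. F₂, all four mutually independent, and define D(F₁,F₂) = (E‖X₁−Y₁‖ − E‖X₁−X₂‖)² + (E‖X₁−Y₁‖ − E‖Y₁−Y₂‖)². Then D(F₁,F₂) = 0 if and only if F₁ = F₂. -/

import Mathlib

open MeasureTheory

namespace EnergyAux

open Set

variable {d : ℕ}

/-- the local notation for the ambient space -/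
abbrev E (d : ℕ) := EuclideanSpace ℝ (Fin d)

/-- separation indicator -/
noncomputable def sep (p : E d × E d) (k : E d × ℝ) : ENNReal :=
  {q : (E d × E d) × (E d × ℝ) | inner ℝ q.2.1 q.1.1 ≤ q.2.2 ∧ q.2.2 < inner ℝ q.2.1 q.1.2}.indicator
    (fun _ => 1) (p, k)

lemma measurableSet_sep : MeasurableSet {q : (E d × E d) × (E d × ℝ) |
    inner ℝ q.2.1 q.1.1 ≤ q.2.2 ∧ q.2.2 < inner ℝ q.2.1 q.1.2} := by
  have h1 : MeasurableSet {q : (E d × E d) × (E d × ℝ) | inner ℝ q.2.1 q.1.1 ≤ q.2.2} :=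
    (isClosed_le (by fun_prop) (by fun_prop)).measurableSet
  have h2 : MeasurableSet {q : (E d × E d) × (E d × ℝ) | q.2.2 < inner ℝ q.2.1 q.1.2} :=
    (isOpen_lt (by fun_prop) (by fun_prop)).measurableSet
  exact h1.inter h2

lemma measurable_sep : Measurable (fun q : (E d × E d) × (E d × ℝ) => sep q.1 q.2) :=
  measurable_const.indicator measurableSet_sep

/-- the measure on pairs (direction, level) -/
noncomputable def kap (d : ℕ) : Measure (E d × ℝ) :=
  ((volume : Measure (E d)).restrict (Metric.ball 0 1)).prod volume

/-- direction average -/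
noncomputable def J (x : E d) : ENNReal :=
  ∫⁻ g in Metric.ball (0 : E d) 1, ‖(inner ℝ g x : ℝ)‖ₑ

lemma sep_swap_measurable : Measurable (fun q : (E d × E d) × (E d × ℝ) => sep q.1.swap q.2) :=
  measurable_sep.comp (by fun_prop : Measurable
    (fun q : (E d × E d) × (E d × ℝ) => (q.1.swap, q.2)))

lemma lintegral_level (p : E d × E d) (g : E d) :
    ∫⁻ t, (sep p (g, t) + sep p.swap (g, t)) = ‖(inner ℝ g (p.1 - p.2) : ℝ)‖ₑ := by
  have key : ∀ p : E d × E d, ∫⁻ t, sep p (g, t) =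
      ENNReal.ofReal (inner ℝ g p.2 - inner ℝ g p.1) := by
    intro p
    have : (fun t => sep p (g, t)) =
        (Ico (inner ℝ g p.1 : ℝ) (inner ℝ g p.2)).indicator (fun _ => 1) := by
      ext t
      simp [sep, indicator]
    rw [this, lintegral_indicator measurableSet_Ico]
    simp
  have hms : Measurable (fun t : ℝ => sep p (g, t)) :=
    measurable_sep.comp (by fun_prop : Measurable (fun t : ℝ => (p, (g, t))))
  rw [lintegral_add_left hms, key, key, inner_sub_right]
  simp only [Prod.fst_swap, Prod.snd_swap]
  generalize (inner ℝ g p.1 : ℝ) = a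
  generalize (inner ℝ g p.2 : ℝ) = b
  rw [Real.enorm_eq_ofReal_abs]
  rcases le_total a b with h | h
  · rw [ENNReal.ofReal_of_nonpos (sub_nonpos.2 h), abs_of_nonpos (sub_nonpos.2 h)]; simp
  · rw [ENNReal.ofReal_of_nonpos (sub_nonpos.2 h), abs_of_nonneg (sub_nonneg.2 h)]; simp

lemma lintegral_kap (p : E d × E d) :
    ∫⁻ k, (sep p k + sep p.swap k) ∂(kap d) = J (p.1 - p.2) := by
  rw [kap, lintegral_prod]
  · simp_rw [lintegral_level]; rfl
  · have m : ∀ p : E d × E d, Measurable (fun k : E d × ℝ => sep p k) := fun p =>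
      measurable_sep.comp (measurable_const.prodMk measurable_id :
        Measurable (fun k : E d × ℝ => (p, k)))
    exact ((m p).add (m p.swap)).aemeasurable

lemma J_smul (a : ℝ) (x : E d) : J (a • x) = ‖a‖ₑ * J x := by
  simp only [J, inner_smul_right, enorm_mul]
  rw [lintegral_const_mul]
  fun_prop

lemma J_iso (R : E d ≃ₗᵢ[ℝ] E d) (x : E d) : J (R x) = J x := by
  have h := (R.measurePreserving.restrict_preimage (s := Metric.ball 0 1)
    measurableSet_ball)
  have hp : R ⁻¹' Metric.ball 0 1 = Metric.ball 0 1 := by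
    ext y; simp
  rw [hp] at h
  have hf : Measurable (fun g : E d => ‖(inner ℝ g (R x) : ℝ)‖ₑ) := by fun_prop
  rw [J, ← h.lintegral_comp hf]
  simp [J]

lemma J_congr {x y : E d} (h : ‖x‖ = ‖y‖) : J x = J y := by
  rw [← Submodule.reflection_sub h, J_iso]

lemma J_eq {e : E d} (he : ‖e‖ = 1) (x : E d) : J x = ‖x‖ₑ * J e := by
  rw [J_congr (y := ‖x‖ • e) (by simp [norm_smul, he]), J_smul]
  simp

lemma J_lt_top {e : E d} (he : ‖e‖ = 1) : J e < ⊤ := by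
  calc J e ≤ ∫⁻ g in Metric.ball (0 : E d) 1, 1 := by
        apply setLIntegral_mono measurable_const
        intro g hg
        rw [Real.enorm_eq_ofReal_abs, ENNReal.ofReal_le_one]
        have := abs_real_inner_le_norm g e
        simp at hg
        nlinarith
    _ < ⊤ := by simpa using measure_ball_lt_top

/-- halfspace probability -/
noncomputable def hp (μ : Measure (E d)) (k : E d × ℝ) : ℝ :=
  μ.real {x | inner ℝ k.1 x ≤ k.2}

lemma lintegral_sep (μ ν : Measure (E d)) [IsProbabilityMeasure μ] [IsProbabilityMeasure ν]
    (k : E d × ℝ) :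
    ∫⁻ p, (sep p k + sep p.swap k) ∂(μ.prod ν) =
      ENNReal.ofReal (hp μ k * (1 - hp ν k) + hp ν k * (1 - hp μ k)) := by
  have hm : MeasurableSet {x : E d | inner ℝ k.1 x ≤ k.2} :=
    (isClosed_le (by fun_prop) (by fun_prop)).measurableSet
  have key : ∀ (μ ν : Measure (E d)) [IsProbabilityMeasure μ] [IsProbabilityMeasure ν],
      ∫⁻ p, sep p k ∂(μ.prod ν) = ENNReal.ofReal (hp μ k * (1 - hp ν k)) := by
    intro μ ν _ _
    have : (fun p => sep p k) =
        ({x : E d | inner ℝ k.1 x ≤ k.2} ×ˢ {x : E d | inner ℝ k.1 x ≤ k.2}ᶜ).indicator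
          (fun _ => 1) := by
      ext p
      simp [sep, indicator]
    rw [this, lintegral_indicator (hm.prod hm.compl), ENNReal.ofReal_mul (by simp [hp])]
    simp only [lintegral_const, one_mul, Measure.restrict_apply MeasurableSet.univ, univ_inter]
    rw [Measure.prod_prod, hp, hp, ← probReal_compl_eq_one_sub hm]
    simp
  have h0 : ∀ (μ : Measure (E d)) [IsProbabilityMeasure μ], 0 ≤ hp μ k ∧ 0 ≤ 1 - hp μ k := by
    intro μ _
    exact ⟨measureReal_nonneg, sub_nonneg.2 measureReal_le_one⟩
  have hk : Measurable (fun p : E d × E d => sep p k) :=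
    measurable_sep.comp (by fun_prop : Measurable (fun p => (p, k)))
  rw [lintegral_add_left hk, key, ENNReal.ofReal_add (mul_nonneg (h0 μ).1 (h0 ν).2)
    (mul_nonneg (h0 ν).1 (h0 μ).2), ← key ν μ, ← Measure.prod_swap (μ := μ) (ν := ν),
    lintegral_map hk measurable_swap]

lemma lintegral_J (μ ν : Measure (E d)) [IsProbabilityMeasure μ] [IsProbabilityMeasure ν] :
    ∫⁻ p, J (p.1 - p.2) ∂(μ.prod ν) =
      ∫⁻ k, ENNReal.ofReal (hp μ k * (1 - hp ν k) + hp ν k * (1 - hp μ k)) ∂(kap d) := by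
  simp_rw [← lintegral_kap, ← lintegral_sep]
  have : SFinite (kap d) := by unfold kap; infer_instance
  rw [lintegral_lintegral_swap]
  exact (measurable_sep.add sep_swap_measurable).aemeasurable

lemma measurable_hp (μ : Measure (E d)) [IsProbabilityMeasure μ] : Measurable (hp μ) := by
  have : MeasurableSet {q : (E d × ℝ) × E d | inner ℝ q.1.1 q.2 ≤ q.1.2} :=
    (isClosed_le (by fun_prop) (by fun_prop)).measurableSet
  exact (measurable_measure_prodMk_left this).ennreal_toReal

lemma integrable_dist (μ ν : Measure (E d)) [IsProbabilityMeasure μ] [IsProbabilityMeasure ν]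
    (h₁ : Integrable (fun x => ‖x‖) μ) (h₂ : Integrable (fun y => ‖y‖) ν) :
    Integrable (fun p : E d × E d => ‖p.1 - p.2‖) (μ.prod ν) := by
  refine Integrable.mono' ((h₁.comp_fst ν).add (h₂.comp_snd μ)) (by fun_prop) ?_
  filter_upwards with p
  simpa using norm_sub_le p.1 p.2

lemma lintegral_J_eq {e : E d} (he : ‖e‖ = 1) (μ ν : Measure (E d)) [IsProbabilityMeasure μ]
    [IsProbabilityMeasure ν]
    (h₁ : Integrable (fun x => ‖x‖) μ) (h₂ : Integrable (fun y => ‖y‖) ν) :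
    ∫⁻ p, J (p.1 - p.2) ∂(μ.prod ν) =
      ENNReal.ofReal (∫ p, ‖p.1 - p.2‖ ∂(μ.prod ν)) * J e := by
  rw [lintegral_congr (fun p : E d × E d => J_eq he (p.1 - p.2))]
  rw [lintegral_mul_const _ (by fun_prop), ofReal_integral_eq_lintegral_ofReal
    (integrable_dist μ ν h₁ h₂) (by filter_upwards with p; positivity)]
  simp

lemma hp_ae_eq {e : E d} (he : ‖e‖ = 1) (μ ν : Measure (E d)) [IsProbabilityMeasure μ]
    [IsProbabilityMeasure ν]
    (h₁ : Integrable (fun x => ‖x‖) μ) (h₂ : Integrable (fun y => ‖y‖) ν)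
    (ha : ∫ p, ‖p.1 - p.2‖ ∂(μ.prod ν) = ∫ p, ‖p.1 - p.2‖ ∂(μ.prod μ))
    (hb : ∫ p, ‖p.1 - p.2‖ ∂(μ.prod ν) = ∫ p, ‖p.1 - p.2‖ ∂(ν.prod ν)) :
    ∀ᵐ k ∂(kap d), hp μ k = hp ν k := by
  have e1 := lintegral_J_eq he μ ν h₁ h₂
  have e2 := lintegral_J_eq he μ μ h₁ h₁
  have e3 := lintegral_J_eq he ν ν h₂ h₂
  rw [← ha, ← e1, lintegral_J, lintegral_J] at e2
  rw [← hb, ← e1, lintegral_J, lintegral_J] at e3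
  have hfin : ∫⁻ k, ENNReal.ofReal (hp μ k * (1 - hp ν k) + hp ν k * (1 - hp μ k)) ∂(kap d)
      ≠ ⊤ := by
    rw [← lintegral_J, e1]
    exact ENNReal.mul_ne_top ENNReal.ofReal_ne_top (J_lt_top he).ne
  set T := ∫⁻ k, ENNReal.ofReal (hp μ k * (1 - hp ν k) + hp ν k * (1 - hp μ k)) ∂(kap d)
  have mμ := measurable_hp μ
  have mν := measurable_hp ν
  have h0 : ∀ (μ : Measure (E d)) [IsProbabilityMeasure μ] (k), 0 ≤ hp μ k ∧ 0 ≤ 1 - hp μ k := by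
    intro μ _ k
    exact ⟨measureReal_nonneg, sub_nonneg.2 measureReal_le_one⟩
  have hsum : T + T = (T + T) + ∫⁻ k, ENNReal.ofReal (2 * (hp μ k - hp ν k) ^ 2) ∂(kap d) := by
    conv_rhs => rw [← e2]
    conv_rhs => enter [1, 2]; rw [e2, ← e3]
    rw [← lintegral_add_left (by fun_prop), ← lintegral_add_left (by fun_prop),
      ← lintegral_add_left (by fun_prop)]
    apply lintegral_congr
    intro k
    have a := h0 μ k
    have b := h0 ν k
    have ab := mul_nonneg a.1 b.2
    have ba := mul_nonneg b.1 a.2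
    have aa := mul_nonneg a.1 a.2
    have bb := mul_nonneg b.1 b.2
    rw [← ENNReal.ofReal_add (by positivity) (by positivity),
      ← ENNReal.ofReal_add (by positivity) (by positivity),
      ← ENNReal.ofReal_add (by positivity) (by positivity)]
    congr 1
    ring
  have hz : ∫⁻ k, ENNReal.ofReal (2 * (hp μ k - hp ν k) ^ 2) ∂(kap d) = 0 := by
    have hne : T + T ≠ ⊤ := ENNReal.add_ne_top.2 ⟨hfin, hfin⟩
    exact (ENNReal.add_right_inj hne).1 (by rw [← hsum, add_zero])
  rw [lintegral_eq_zero_iff (by fun_prop)] at hz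
  filter_upwards [hz] with k hk
  simp only [Pi.zero_apply, ENNReal.ofReal_eq_zero] at hk
  nlinarith [sq_nonneg (hp μ k - hp ν k), pow_eq_zero_iff (two_ne_zero) |>.1
    (le_antisymm (by linarith) (sq_nonneg (hp μ k - hp ν k)))]

lemma eq_of_hp (μ ν : Measure (E d)) [IsProbabilityMeasure μ] [IsProbabilityMeasure ν]
    (h : ∀ᵐ k ∂(kap d), hp μ k = hp ν k) : μ = ν := by
  have h1 := Measure.ae_ae_of_ae_prod h
  have h2 : ∀ᵐ g ∂((volume : Measure (E d)).restrict (Metric.ball 0 1)), ∀ s : ℝ,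
      charFun μ (s • g) = charFun ν (s • g) := by
    filter_upwards [h1] with g hg
    have hm : Measurable (fun x : E d => (inner ℝ g x : ℝ)) := by fun_prop
    have := Measure.isProbabilityMeasure_map (μ := μ) hm.aemeasurable
    have := Measure.isProbabilityMeasure_map (μ := ν) hm.aemeasurable
    have hmap : μ.map (fun x : E d => (inner ℝ g x : ℝ)) = ν.map (fun x => inner ℝ g x) := by
      apply Measure.eq_of_cdf
      have hc : ∀ (μ : Measure (E d)) [IsProbabilityMeasure μ] (t : ℝ),
          ProbabilityTheory.cdf (μ.map (fun x : E d => (inner ℝ g x : ℝ))) t = hp μ (g, t) := by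
        intro μ _ t
        have := Measure.isProbabilityMeasure_map (μ := μ) hm.aemeasurable
        rw [ProbabilityTheory.cdf_eq_real, map_measureReal_apply hm measurableSet_Iic]
        rfl
      ext t
      have hd : Dense {t | hp μ (g, t) = hp ν (g, t)} := Measure.dense_of_ae hg
      have hcl : ∀ t, ∃ᶠ u in nhdsWithin t (Ioi t), hp μ (g, u) = hp ν (g, u) := by
        intro t
        rw [(nhdsGT_basis t).frequently_iff]
        intro b hb
        obtain ⟨u, hu, hu'⟩ := hd.exists_between hb
        exact ⟨u, hu', hu⟩
      have r : ∀ (μ : Measure (E d)) [IsProbabilityMeasure μ],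
          Filter.Tendsto (fun u => hp μ (g, u)) (nhdsWithin t (Ioi t)) (nhds (hp μ (g, t))) := by
        intro μ _
        simp_rw [← hc]
        exact ((ProbabilityTheory.cdf _).right_continuous t).tendsto.mono_left
          (nhdsWithin_mono _ Ioi_subset_Ici_self)
      rw [hc, hc]
      exact tendsto_nhds_unique_of_frequently_eq (r μ) (r ν) (hcl t)
    intro s
    have hf : ∀ (μ : Measure (E d)), charFun μ (s • g) =
        charFun (μ.map (fun x : E d => (inner ℝ g x : ℝ))) s := by
      intro μ
      rw [charFun_apply_real, integral_map hm.aemeasurable (by fun_prop), charFun_apply]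
      simp [inner_smul_right, real_inner_comm]
    rw [hf, hf, hmap]
  have h3 : ∀ s : ℝ, EqOn (fun g : E d => charFun μ (s • g)) (fun g => charFun ν (s • g))
      (Metric.ball 0 1) := by
    intro s
    refine Measure.eqOn_open_of_ae_eq (μ := volume) ?_ Metric.isOpen_ball ?_ ?_
    · filter_upwards [h2] with g hg using hg s
    · exact (continuous_charFun.comp (continuous_const_smul s)).continuousOn
    · exact (continuous_charFun.comp (continuous_const_smul s)).continuousOn
  apply Measure.ext_of_charFun
  ext ξ
  have hpos : 0 < ‖ξ‖ + 1 := by positivity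
  have := h3 (‖ξ‖ + 1) (x := (‖ξ‖ + 1)⁻¹ • ξ) (by
    simp only [Metric.mem_ball, dist_zero_right, norm_smul, norm_inv, Real.norm_eq_abs,
      abs_of_pos hpos]
    rw [inv_mul_lt_iff₀ hpos]; linarith)
  simpa [smul_smul, mul_inv_cancel₀ hpos.ne'] using this

end EnergyAux

/-- For probability distributions `F₁, F₂` on `ℝ^d` with finite first
moments, writing `E‖X−Y‖` for the expected Euclidean distance between independent
`X ∼ F₁` and `Y ∼ F₂` (an integral against the product measure), the divergence
`D(F₁,F₂) = (E‖X₁−Y₁‖ − E‖X₁−X₂‖)² + (E‖X₁−Y₁‖ − E‖Y₁−Y₂‖)²`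
vanishes if and only if `F₁ = F₂`. -/
theorem statement0 (d : ℕ) (hd : 1 ≤ d)
    (F₁ F₂ : Measure (EuclideanSpace ℝ (Fin d)))
    [IsProbabilityMeasure F₁] [IsProbabilityMeasure F₂]
    (h₁ : Integrable (fun x => ‖x‖) F₁)
    (h₂ : Integrable (fun y => ‖y‖) F₂) :
    ((∫ p, ‖p.1 - p.2‖ ∂(F₁.prod F₂)) - (∫ p, ‖p.1 - p.2‖ ∂(F₁.prod F₁))) ^ 2 +
      ((∫ p, ‖p.1 - p.2‖ ∂(F₁.prod F₂)) - (∫ p, ‖p.1 - p.2‖ ∂(F₂.prod F₂))) ^ 2 = 0 ↔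
    F₁ = F₂ := by
  constructor
  · intro h
    have ha := sq_nonneg ((∫ p, ‖p.1 - p.2‖ ∂(F₁.prod F₂)) - (∫ p, ‖p.1 - p.2‖ ∂(F₁.prod F₁)))
    have hb := sq_nonneg ((∫ p, ‖p.1 - p.2‖ ∂(F₁.prod F₂)) - (∫ p, ‖p.1 - p.2‖ ∂(F₂.prod F₂)))
    have ha' := pow_eq_zero_iff (two_ne_zero) |>.1 (le_antisymm (by linarith) ha)
    have hb' := pow_eq_zero_iff (two_ne_zero) |>.1 (le_antisymm (by linarith) hb)
    have he : ‖(EuclideanSpace.single (⟨0, hd⟩ : Fin d) (1 : ℝ))‖ = 1 := by simp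
    exact EnergyAux.eq_of_hp F₁ F₂
      (EnergyAux.hp_ae_eq he F₁ F₂ h₁ h₂ (sub_eq_zero.1 ha') (sub_eq_zero.1 hb'))
  · rintro rfl
    simp
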